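/- Let X^n = (X₁,…,X_n) be a discrete random vector on finite alphabets and let Y^n be the output of a memoryless erasure channel applied coordinatewise: Y_i = X_i with probability p and Y_i = e otherwise, with erasure indicators B₁,…,B_n i.i.d. Bernoulli(p) independent of X^n. Then I(X^n; Y^n) = p·H(X^n) + (1−p)·∑_{i=1}^n I(X_i; Y_{i+1},…,Y_n | X₁,…,X_{i−1}). -/

import Mathlib

open Real Finset

open scoped Classical in
/-- Probability that the random variable `X` takes the value `a`, under the pmf `f`
on the finite sample space `Ω`. -/
noncomputable def pr {Ω α : Type*} [Fintype Ω] (f : Ω → ℝ) (X : Ω → α) (a : α) : ℝ :=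
  ∑ ω, if X ω = a then f ω else 0

/-- Shannon entropy (natural log) of a random variable `X` on a finite space. -/
noncomputable def ent {Ω α : Type*} [Fintype Ω] [Fintype α] (f : Ω → ℝ) (X : Ω → α) : ℝ :=
  ∑ a, Real.negMulLog (pr f X a)

/-- Mutual information `I(X;Y) = H(X) + H(Y) - H(X,Y)`. -/
noncomputable def mi {Ω α β : Type*} [Fintype Ω] [Fintype α] [Fintype β]
    (f : Ω → ℝ) (X : Ω → α) (Y : Ω → β) : ℝ :=
  ent f X + ent f Y - ent f (fun ω => (X ω, Y ω))

/-- Conditional entropy `H(X|Y) = H(X,Y) - H(Y)`. -/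
noncomputable def condEnt {Ω α β : Type*} [Fintype Ω] [Fintype α] [Fintype β]
    (f : Ω → ℝ) (X : Ω → α) (Y : Ω → β) : ℝ :=
  ent f (fun ω => (X ω, Y ω)) - ent f Y

/-- Conditional mutual information
`I(X;Y|Z) = H(X,Z) + H(Y,Z) - H(X,Y,Z) - H(Z)`. -/
noncomputable def cmi {Ω α β γ : Type*} [Fintype Ω] [Fintype α] [Fintype β] [Fintype γ]
    (f : Ω → ℝ) (X : Ω → α) (Y : Ω → β) (Z : Ω → γ) : ℝ :=
  ent f (fun ω => (X ω, Z ω)) + ent f (fun ω => (Y ω, Z ω))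
    - ent f (fun ω => (X ω, Y ω, Z ω)) - ent f Z

theorem ent_eq_sum {Ω α : Type*} [Fintype Ω] [Fintype α] (f : Ω → ℝ) (X : Ω → α) :
    ent f X = ∑ ω, f ω * (-Real.log (pr f X (X ω))) := by
  classical
  have h : ∀ a, Real.negMulLog (pr f X a)
      = ∑ ω, if X ω = a then f ω * (-Real.log (pr f X a)) else 0 := by
    intro a
    have : Real.negMulLog (pr f X a) = pr f X a * (-Real.log (pr f X a)) := by
      rw [Real.negMulLog]; ring
    rw [this]
    generalize -Real.log (pr f X a) = t
    rw [pr, Finset.sum_mul]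
    refine Finset.sum_congr rfl fun ω _ => ?_
    split_ifs <;> simp
  rw [ent, Finset.sum_congr rfl (fun a _ => h a), Finset.sum_comm]
  refine Finset.sum_congr rfl fun ω _ => ?_
  simp

theorem ent_congr {Ω α β : Type*} [Fintype Ω] [Fintype α] [Fintype β] (f : Ω → ℝ)
    (X : Ω → α) (Z : Ω → β) (h : ∀ ω ω', X ω = X ω' ↔ Z ω = Z ω') : ent f X = ent f Z := by
  classical
  rw [ent_eq_sum, ent_eq_sum]
  refine Finset.sum_congr rfl fun ω _ => ?_
  have : pr f X (X ω) = pr f Z (Z ω) := by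
    unfold pr
    refine Finset.sum_congr rfl fun ω' _ => ?_
    simp only [h ω' ω]
  rw [this]

theorem pr_congr {Ω α β : Type*} [Fintype Ω] (f : Ω → ℝ) (X : Ω → α) (Z : Ω → β) (a : α) (b : β)
    (h : ∀ ω, X ω = a ↔ Z ω = b) : pr f X a = pr f Z b := by
  unfold pr
  refine Finset.sum_congr rfl fun ω _ => ?_
  by_cases hx : X ω = a
  · rw [if_pos hx, if_pos ((h ω).1 hx)]
  · rw [if_neg hx, if_neg (fun hz => hx ((h ω).2 hz))]

theorem sum_pr_mul {Ω α : Type*} [Fintype Ω] [Fintype α] (f : Ω → ℝ) (X : Ω → α) (g : α → ℝ) :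
    ∑ a, pr f X a * g a = ∑ ω, f ω * g (X ω) := by
  classical
  simp only [pr, Finset.sum_mul]
  rw [Finset.sum_comm]
  refine Finset.sum_congr rfl fun ω _ => ?_
  simp [ite_mul]

theorem pr_comp {Ω α β : Type*} [Fintype Ω] [Fintype α] (f : Ω → ℝ) (X : Ω → α) (g : α → β)
    (b : β) [∀ a, Decidable (g a = b)] :
    pr f (fun ω => g (X ω)) b = ∑ a, pr f X a * (if g a = b then 1 else 0) := by
  classical
  rw [sum_pr_mul]
  unfold pr
  refine Finset.sum_congr rfl fun ω _ => ?_
  simp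

theorem pr_indep_comp {Ω α β γ : Type*} [Fintype Ω] [Fintype α] [Fintype γ]
    (f : Ω → ℝ) (U : Ω → α) (C : Ω → γ) (q : γ → ℝ)
    (h : ∀ u c, pr f (fun ω => (U ω, C ω)) (u, c) = pr f U u * q c) (g : α → β) (z : β) (c : γ) :
    pr f (fun ω => (g (U ω), C ω)) (z, c) = pr f (fun ω => g (U ω)) z * q c := by
  classical
  rw [pr_comp f U g z, pr_comp f (fun ω => (U ω, C ω)) (fun x => (g x.1, x.2)) (z, c),
    Fintype.sum_prod_type, Finset.sum_mul]
  refine Finset.sum_congr rfl fun u _ => ?_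
  simp only [h, Prod.mk.injEq]
  rw [Finset.sum_eq_single c]
  · simp
  · intro b _ hb; simp [hb]
  · simp

def qq (p : ℝ) (b : Bool) : ℝ := if b then p else 1 - p

theorem ent_erase {Ω α β : Type*} [Fintype Ω] [Fintype α] [Fintype β]
    (f : Ω → ℝ) (hf1 : ∑ ω, f ω = 1) (p : ℝ) (W : Ω → α) (V : Ω → β) (C : Ω → Bool)
    (h : ∀ u c, pr f (fun ω => ((W ω, V ω), C ω)) (u, c) = pr f (fun ω => (W ω, V ω)) u * qq p c)
    (Y : Ω → Option β) (hY : ∀ ω, Y ω = if C ω then some (V ω) else none) :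
    ent f (fun ω => (W ω, Y ω)) = Real.negMulLog p + Real.negMulLog (1 - p)
      + p * ent f (fun ω => (W ω, V ω)) + (1 - p) * ent f W := by
  classical
  have hW := pr_indep_comp f (fun ω => (W ω, V ω)) C (qq p) h Prod.fst
  have h1 : ∀ w, pr f (fun ω => (W ω, Y ω)) (w, none) = pr f W w * (1 - p) := by
    intro w
    have := hW w false
    simp only [qq] at this
    simp only [Bool.false_eq_true, if_false] at this
    rw [← this]
    unfold pr
    refine Finset.sum_congr rfl fun ω _ => ?_
    rcases hc : C ω <;> simp [hY, hc]
  have h2 : ∀ w v, pr f (fun ω => (W ω, Y ω)) (w, some v)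
      = pr f (fun ω => (W ω, V ω)) (w, v) * p := by
    intro w v
    have := h (w, v) true
    simp only [qq, if_true] at this
    rw [← this]
    unfold pr
    refine Finset.sum_congr rfl fun ω _ => ?_
    rcases hc : C ω <;> simp [hY, hc]
  have s1 : ∑ w, pr f W w = 1 := by simpa [hf1] using sum_pr_mul f W (fun _ => 1)
  have s2 : ∑ w, ∑ v, pr f (fun ω => (W ω, V ω)) (w, v) = 1 := by
    rw [← Fintype.sum_prod_type']
    simpa [hf1] using sum_pr_mul f (fun ω => (W ω, V ω)) (fun _ => 1)
  simp only [ent]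
  rw [Fintype.sum_prod_type, Fintype.sum_prod_type]
  simp only [Fintype.sum_option, h1, h2, Real.negMulLog_mul, Finset.sum_add_distrib,
    ← Finset.mul_sum, ← Finset.sum_mul, s1, s2]
  ring

theorem indep_coord {Ω : Type*} [Fintype Ω] {n : ℕ} {α : Fin n → Type*}
    [∀ i, Fintype (α i)] (f : Ω → ℝ) (p : ℝ) (X : ∀ i, Ω → α i) (B : Fin n → Ω → Bool)
    (hind : ∀ (a : ∀ i, α i) (b : Fin n → Bool),
      pr f (fun ω => (fun i => X i ω, fun i => B i ω)) (a, b)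
        = pr f (fun ω i => X i ω) a * ∏ i, (if b i then p else 1 - p)) (i : Fin n)
    (u : (∀ i, α i) × ({j : Fin n // j ≠ i} → Bool)) (c : Bool) :
    pr f (fun ω => (((fun i => X i ω), (fun j : {j : Fin n // j ≠ i} => B j.1 ω)), B i ω)) (u, c)
      = pr f (fun ω => ((fun i => X i ω), (fun j : {j : Fin n // j ≠ i} => B j.1 ω))) u
        * qq p c := by
  classical
  obtain ⟨a, b⟩ := u
  have key : ∀ c, pr f (fun ω => (((fun i => X i ω),
      (fun j : {j : Fin n // j ≠ i} => B j.1 ω)), B i ω)) ((a, b), c)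
      = pr f (fun ω i => X i ω) a * (∏ j, qq p (b j)) * qq p c := by
    intro c
    have := hind a (fun j => if h : j = i then c else b ⟨j, h⟩)
    rw [Fintype.prod_eq_mul_prod_subtype_ne _ i] at this
    have e : ∀ j : {j : Fin n // j ≠ i},
      (if (if h : j.1 = i then c else b ⟨j.1, h⟩) = true then p else 1 - p) = qq p (b j) := by
      intro j; simp [j.2, qq]
    simp only [e] at this
    rw [dif_pos trivial] at this
    rw [mul_assoc, mul_comm (∏ j, qq p (b j))]
    refine Eq.trans ?_ this
    refine pr_congr _ _ _ _ _ fun ω => ?_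
    simp only [Prod.mk.injEq, and_assoc]
    refine and_congr_right fun _ => ?_
    constructor
    · rintro ⟨h1, h2⟩
      funext j
      by_cases hj : j = i
      · subst hj; simp [h2]
      · simp only [hj, dif_neg, not_false_eq_true]; exact congrFun h1 ⟨j, hj⟩
    · intro h
      constructor
      · funext j
        have := congrFun h j.1
        simpa [j.2] using this
      · simpa using congrFun h i
  rw [key]
  congr 1
  have := pr_comp f (fun ω => (((fun i => X i ω),
      (fun j : {j : Fin n // j ≠ i} => B j.1 ω)), B i ω)) Prod.fst (a, b)
  rw [this, Fintype.sum_prod_type]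
  rw [Finset.sum_eq_single (a, b)]
  · simp [key, qq]; ring
  · intro b _ hb; simp [hb]
  · simp

theorem ent_XB {Ω : Type*} [Fintype Ω] {n : ℕ} {α : Fin n → Type*}
    [∀ i, Fintype (α i)] (f : Ω → ℝ) (hf0 : ∀ ω, 0 ≤ f ω) (hf1 : ∑ ω, f ω = 1)
    (p : ℝ) (X : ∀ i, Ω → α i) (B : Fin n → Ω → Bool)
    (hind : ∀ (a : ∀ i, α i) (b : Fin n → Bool),
      pr f (fun ω => (fun i => X i ω, fun i => B i ω)) (a, b)
        = pr f (fun ω i => X i ω) a * ∏ i, (if b i then p else 1 - p)) :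
    ent f (fun ω => (fun i => X i ω, fun i => B i ω))
      = ent f (fun ω i => X i ω) + n * (Real.negMulLog p + Real.negMulLog (1 - p)) := by
  classical
  have hB : ∀ i, ∑ ω, f ω * (-Real.log (qq p (B i ω)))
      = Real.negMulLog p + Real.negMulLog (1 - p) := by
    intro i
    rw [← sum_pr_mul f (B i) (fun c => -Real.log (qq p c))]
    have hc : ∀ c, pr f (B i) c = qq p c := by
      intro c
      have := pr_indep_comp f _ (B i) (qq p)
        (fun u c => indep_coord f p X B hind i u c) (fun _ => ()) () c
      have e1 : pr f (fun _ : Ω => ()) () = 1 := by simp [pr, hf1]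
      rw [e1, one_mul] at this
      rw [← this]
      unfold pr
      refine Finset.sum_congr rfl fun ω _ => ?_
      simp
    simp [hc, qq, Real.negMulLog]
    ring
  rw [ent_eq_sum, ent_eq_sum]
  have : (n : ℝ) * (Real.negMulLog p + Real.negMulLog (1 - p))
      = ∑ i : Fin n, ∑ ω, f ω * (-Real.log (qq p (B i ω))) := by
    rw [Finset.sum_congr rfl (fun i _ => hB i)]
    simp
    ring
  rw [this, Finset.sum_comm, ← Finset.sum_add_distrib]
  refine Finset.sum_congr rfl fun ω _ => ?_
  by_cases h0 : f ω = 0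
  · simp [h0]
  have hpos : pr f (fun ω => (fun i => X i ω, fun i => B i ω))
      (fun i => X i ω, fun i => B i ω) ≠ 0 := by
    have h1 : f ω ≤ pr f (fun ω => (fun i => X i ω, fun i => B i ω))
        (fun i => X i ω, fun i => B i ω) := by
      unfold pr
      refine le_trans ?_ (Finset.single_le_sum (fun ω' _ => ?_) (Finset.mem_univ ω))
      · simp
      · split_ifs
        · exact hf0 _
        · exact le_rfl
    have h2 := lt_of_le_of_ne (hf0 ω) (Ne.symm h0)
    linarith
  rw [hind] at hpos ⊢
  have hp := right_ne_zero_of_mul hpos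
  rw [Real.log_mul (left_ne_zero_of_mul hpos) hp,
    Real.log_prod (fun i hi => Finset.prod_ne_zero_iff.mp hp i hi)]
  rw [← Finset.mul_sum, Finset.sum_neg_distrib]
  simp only [qq]
  ring

/-- For a coordinatewise memoryless erasure channel,
`I(Xⁿ;Yⁿ) = p H(Xⁿ) + (1-p) ∑ᵢ I(Xᵢ; Y_{i+1}ⁿ | X₁^{i-1})`. -/
theorem erasure_vector_mi_identity {Ω : Type*} [Fintype Ω] {n : ℕ} {α : Fin n → Type*}
    [∀ i, Fintype (α i)]
    (f : Ω → ℝ) (hf0 : ∀ ω, 0 ≤ f ω) (hf1 : ∑ ω, f ω = 1)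
    (p : ℝ) (X : ∀ i, Ω → α i) (B : Fin n → Ω → Bool)
    (hind : ∀ (a : ∀ i, α i) (b : Fin n → Bool),
      pr f (fun ω => (fun i => X i ω, fun i => B i ω)) (a, b)
        = pr f (fun ω i => X i ω) a * ∏ i, (if b i then p else 1 - p))
    (Y : ∀ i, Ω → Option (α i)) (hY : ∀ i ω, Y i ω = if B i ω then some (X i ω) else none) :
    mi f (fun ω i => X i ω) (fun ω i => Y i ω)
      = p * ent f (fun ω i => X i ω)
        + (1 - p) * ∑ i, cmi f (X i)
            (fun ω => fun j : {j : Fin n // i < j} => Y j.1 ω)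
            (fun ω => fun j : {j : Fin n // j < i} => X j.1 ω) := by
  classical
  have hXY : ent f (fun ω => ((fun i => X i ω), (fun i => Y i ω)))
      = ent f (fun ω => (fun i => X i ω, fun i => B i ω)) := by
    refine ent_congr _ _ _ fun ω ω' => ?_
    simp only [Prod.mk.injEq]
    refine and_congr_right fun h => ?_
    constructor
    · intro h2
      funext i
      have := congrFun h2 i
      simp only [hY] at this
      rcases h3 : B i ω <;> rcases h4 : B i ω' <;> simp_all
    · intro h2
      funext i
      have e1 := congrFun h i
      have e2 := congrFun h2 i
      rw [hY, hY, e1, e2]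
  rw [ent_XB f hf0 hf1 p X B hind] at hXY
  set h := Real.negMulLog p + Real.negMulLog (1 - p) with hh
  let S : ℕ → ℝ := fun k => ent f (fun ω => fun j : {j : Fin n // j.1 < k} => X j.1 ω)
  let A : ℕ → ℝ := fun k => ent f (fun ω => ((fun j : {j : Fin n // j.1 < k} => X j.1 ω),
    (fun j : {j : Fin n // k ≤ j.1} => Y j.1 ω)))
  have hS0 : S 0 = 0 := by
    have : S 0 = ent f (fun _ : Ω => ()) := by
      refine ent_congr _ _ _ fun ω ω' => ?_
      simp only [iff_true]
      funext j
      exact absurd j.2 (by omega)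
    rw [this]
    simp [ent, pr, hf1]
  have hSn : S n = ent f (fun ω i => X i ω) := by
    refine ent_congr _ _ _ fun ω ω' => ?_
    simp only [funext_iff, Subtype.forall]
    exact ⟨fun h j => h j j.2, fun h j _ => h j⟩
  have hA0 : A 0 = ent f (fun ω i => Y i ω) := by
    refine ent_congr _ _ _ fun ω ω' => ?_
    simp [funext_iff]
  have hAn : A n = ent f (fun ω i => X i ω) := by
    refine ent_congr _ _ _ fun ω ω' => ?_
    simp only [Prod.mk.injEq, funext_iff, Subtype.forall]
    exact ⟨fun h j => h.1 j j.2, fun h => ⟨fun j _ => h j, fun j hj => absurd j.2 (by omega)⟩⟩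
  have step : ∀ i : Fin n, (1 - p) * cmi f (X i)
            (fun ω => fun j : {j : Fin n // i < j} => Y j.1 ω)
            (fun ω => fun j : {j : Fin n // j < i} => X j.1 ω)
      = (1 - p) * (S (i.1 + 1) - S i.1) - (A (i.1 + 1) - A i.1) - h := by
    intro i
    have c1 : ent f (fun ω => (X i ω, fun j : {j : Fin n // j < i} => X j.1 ω)) = S (i.1 + 1) := by
      refine ent_congr _ _ _ fun ω ω' => ?_
      simp only [Prod.mk.injEq, funext_iff, Subtype.forall]
      constructor
      · rintro ⟨h1, h2⟩ j hj
        by_cases e : j = i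
        · subst e; exact h1
        · exact h2 j (by omega)
      · intro h
        exact ⟨h i (by omega), fun j hj => h j (by omega)⟩
    have c2 : ent f (fun ω => fun j : {j : Fin n // j < i} => X j.1 ω) = S i.1 := by
      refine ent_congr _ _ _ fun ω ω' => ?_
      simp only [funext_iff, Subtype.forall]
      rfl
    have c3 : ent f (fun ω => (X i ω, (fun j : {j : Fin n // i < j} => Y j.1 ω),
        fun j : {j : Fin n // j < i} => X j.1 ω)) = A (i.1 + 1) := by
      refine ent_congr _ _ _ fun ω ω' => ?_
      simp only [Prod.mk.injEq, funext_iff, Subtype.forall]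
      constructor
      · rintro ⟨h1, h2, h3⟩
        refine ⟨fun j hj => ?_, fun j hj => h2 j (by omega)⟩
        by_cases e : j = i
        · subst e; exact h1
        · exact h3 j (by omega)
      · rintro ⟨h1, h2⟩
        exact ⟨h1 i (by omega), fun j hj => h2 j (by omega), fun j hj => h1 j (by omega)⟩
    have c4 := ent_erase f hf1 p (fun ω => ((fun j : {j : Fin n // i < j} => Y j.1 ω),
        fun j : {j : Fin n // j < i} => X j.1 ω)) (X i) (B i) (by
      intro u c
      have := pr_indep_comp f _ (B i) (qq p)
        (fun u c => indep_coord f p X B hind i u c)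
        (fun x : (∀ i, α i) × ({j : Fin n // j ≠ i} → Bool) =>
          (((fun j : {j : Fin n // i < j} =>
              if x.2 ⟨j.1, ne_of_gt j.2⟩ then some (x.1 j.1) else none),
            fun j : {j : Fin n // j < i} => x.1 j.1), x.1 i)) u c
      simpa only [hY] using this) (Y i) (hY i)
    have c5 : ent f (fun ω => (((fun j : {j : Fin n // i < j} => Y j.1 ω),
        fun j : {j : Fin n // j < i} => X j.1 ω), X i ω)) = A (i.1 + 1) := by
      rw [← c3]
      refine ent_congr _ _ _ fun ω ω' => ?_
      simp only [Prod.mk.injEq]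
      tauto
    have c6 : ent f (fun ω => (((fun j : {j : Fin n // i < j} => Y j.1 ω),
        fun j : {j : Fin n // j < i} => X j.1 ω), Y i ω)) = A i.1 := by
      refine ent_congr _ _ _ fun ω ω' => ?_
      simp only [Prod.mk.injEq, funext_iff, Subtype.forall]
      constructor
      · rintro ⟨⟨h2, h3⟩, h1⟩
        refine ⟨fun j hj => h3 j (by omega), fun j hj => ?_⟩
        by_cases e : j = i
        · subst e; exact h1
        · exact h2 j (by omega)
      · rintro ⟨h1, h2⟩
        exact ⟨⟨fun j hj => h2 j (by omega), fun j hj => h1 j (by omega)⟩, h2 i (by omega)⟩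
    rw [c5, c6] at c4
    rw [cmi, c1, c2, c3]
    linarith
  rw [Finset.mul_sum, Finset.sum_congr rfl (fun i _ => step i),
    Fin.sum_univ_eq_sum_range
      (fun k => (1 - p) * (S (k + 1) - S k) - (A (k + 1) - A k) - h) n,
    Finset.sum_sub_distrib, Finset.sum_sub_distrib, ← Finset.mul_sum,
    Finset.sum_range_sub, Finset.sum_range_sub, hS0, hSn, hA0, hAn, mi, hXY]
  simp
  ring
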